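/- The one-dimensional fractional testing condition fails for the pair (σ̈, ω̈): ∫_{[0,1]} (T̈(1_{[0,1]}ω̈)(x))² dσ̈(x) = ∞, where T̈(μ)(x) = ∫_ℝ |x−y|^{−(2−α)} dμ(y). -/

import Mathlib

/-!
At the centre `z` of a generation-`k` interval `I`, the left half of the Cantor set inside `I`
has mass `2^{-(k+1)}` and lies at positive distance at most `|I| = δ^k` from `z`; hence
`T̈ω̈(z) ≥ 2^{-(k+1)} δ^{-k(2-α)} = 2^{-(k+1)} s₀^k` (`potential_lower`). The weight
`(2/s₀²)^k` at `z` exactly cancels the power of `s₀`, so each of the `2^k` centres contributes at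
least `2^{-k}/4` to the integral, each generation at least `1/4`, and the sum over all
generations diverges.

Only the left child is used, rather than the whole interval, because `0 ^ (α - 2) = 0` for
`Real.rpow`: the kernel bound needs `y ≠ z`.
-/

open MeasureTheory Set ENNReal Filter

noncomputable section

/-- The length ratio `δ = (1-b)/2` of the middle-`b` Cantor construction. -/
def del (b : ℝ) : ℝ := (1 - b) / 2

/-- `s₀ = δ^{-(2-α)}`, i.e. `s₀⁻¹ = ((1-b)/2)^{2-α}`. -/
def s0 (α b : ℝ) : ℝ := del b ^ (-(2 - α))

/-- Left endpoint of the generation-`k` interval of the middle-`b` Cantor construction on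
`[0,1]` with `0`-based index `m` (the two children of the interval with index `m` at
generation `k` are the intervals with indices `2m` and `2m+1` at generation `k+1`). -/
def cantorLeft (b : ℝ) : ℕ → ℕ → ℝ
  | 0, _ => 0
  | k + 1, m => cantorLeft b k (m / 2) + (if m % 2 = 1 then (1 + b) / 2 * del b ^ k else 0)

/-- The generation-`k` Cantor interval `I_j^k` (`1`-based index `j`), of length `δ^k`. -/
def cantorI (b : ℝ) (k j : ℕ) : Set ℝ :=
  Icc (cantorLeft b k (j - 1)) (cantorLeft b k (j - 1) + del b ^ k)

/-- The center `z̈_j^k` of the removed open middle gap `G_j^k` of `I_j^k`. -/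
def zc (b : ℝ) (k j : ℕ) : ℝ := cantorLeft b k (j - 1) + del b ^ k / 2

/-- The left endpoint `a_j^k` of the removed open middle gap `G_j^k` of `I_j^k`. -/
def gapLeft (b : ℝ) (k j : ℕ) : ℝ := cantorLeft b k (j - 1) + del b ^ (k + 1)

/-- The middle-`b` Cantor set `E_b = ∩_k ∪_j I_j^k`. -/
def cantorSetMid (b : ℝ) : Set ℝ := ⋂ k : ℕ, ⋃ j : Fin (2 ^ k), cantorI b k (j + 1)

/-- The weights `s_j^k = (2/s₀²)^k`. -/
def sWt (α b : ℝ) (k : ℕ) : ℝ := (2 / s0 α b ^ 2) ^ k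

/-- The measure `σ̈ = Σ_{k≥0} Σ_{j=1}^{2^k} s_j^k δ_{z̈_j^k}`. -/
def sigmaM (α b : ℝ) : Measure ℝ :=
  Measure.sum fun k : ℕ => Measure.sum fun j : Fin (2 ^ k) =>
    ENNReal.ofReal (sWt α b k) • Measure.dirac (zc b k (j + 1))

/-- `ω` is the middle-`b` Cantor measure: the (unique) Borel probability measure supported
in `[0,1]` that assigns mass `2^{-k}` to each generation-`k` Cantor interval. -/
def IsCantorMeasure (b : ℝ) (ω : Measure ℝ) : Prop :=
  IsProbabilityMeasure ω ∧ ω (Icc (0 : ℝ) 1)ᶜ = 0 ∧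
    ∀ k j : ℕ, 1 ≤ j → j ≤ 2 ^ k → ω (cantorI b k j) = (2 ^ k : ℝ≥0∞)⁻¹

/-- The length of a (bounded) interval, viewed as a set. -/
def lenS (S : Set ℝ) : ℝ := sSup S - sInf S

/-- The center of a (bounded) interval, viewed as a set. -/
def ctrS (S : Set ℝ) : ℝ := (sInf S + sSup S) / 2

/-- The standard Poisson integral `Ṗ(I,μ) = ∫ |I|/(|I|+|x-x_I|)^{3-α} dμ(x)`. -/
def stdP (α : ℝ) (S : Set ℝ) (μ : Measure ℝ) : ℝ≥0∞ :=
  ∫⁻ x, ENNReal.ofReal (lenS S / (lenS S + |x - ctrS S|) ^ (3 - α)) ∂μ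

/-- The variant (reproducing) Poisson integral
`𝒫̈(I,μ) = ∫ (|I|/(|I|+|x-x_I|)²)^{2-α} dμ(x)`. -/
def varP (α : ℝ) (S : Set ℝ) (μ : Measure ℝ) : ℝ≥0∞ :=
  ∫⁻ x, ENNReal.ofReal ((lenS S / (lenS S + |x - ctrS S|) ^ 2) ^ (2 - α)) ∂μ

/-- The energy `E(I,μ)² = (1/(2μ(I)²)) ∫_I ∫_I ((x-x')²/|I|²) dμ(x') dμ(x)`. -/
def energyE2 (S : Set ℝ) (μ : Measure ℝ) : ℝ≥0∞ :=
  (2 * μ S ^ 2)⁻¹ * ∫⁻ x in S, ∫⁻ x' in S, ENNReal.ofReal ((x - x') ^ 2 / lenS S ^ 2) ∂μ ∂μ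

/-- The fractional maximal function `M^α μ(x) = sup_{I ∋ x} μ(I)/|I|^{2-α}`. -/
def maxFn (α : ℝ) (μ : Measure ℝ) (x : ℝ) : ℝ≥0∞ :=
  ⨆ (a : ℝ) (c : ℝ) (_ : a < c) (_ : x ∈ Icc a c),
    μ (Icc a c) / ENNReal.ofReal ((c - a) ^ (2 - α))

/-- The point `ż_j^k = a_j^k + c·b·δ^k` inside the gap `G_j^k`. -/
def zdot (b c : ℝ) (k j : ℕ) : ℝ := gapLeft b k j + c * b * del b ^ k

/-- The measure `σ̇ = Σ_{k≥1} Σ_{j=1}^{2^k} s_j^k δ_{ż_j^k}`. -/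
def sigmaDot (α b c : ℝ) : Measure ℝ :=
  Measure.sum fun k : ℕ => Measure.sum fun j : Fin (2 ^ (k + 1)) =>
    ENNReal.ofReal (sWt α b (k + 1)) • Measure.dirac (zdot b c (k + 1) (j + 1))

lemma cantorLeft_two_mul (b : ℝ) (k m : ℕ) : cantorLeft b (k + 1) (2 * m) = cantorLeft b k m := by
  simp [cantorLeft]

lemma cantorLeft_mem {b : ℝ} (hb1 : 1 / 3 ≤ b) (hb2 : b < 1) (k m : ℕ) :
    0 ≤ cantorLeft b k m ∧ cantorLeft b k m + del b ^ k ≤ 1 := by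
  induction k generalizing m with
  | zero => simp [cantorLeft]
  | succ k ih =>
    obtain ⟨h0, h1⟩ := ih (m / 2)
    have hd : 0 < del b := by unfold del; linarith
    have hk : 0 < del b ^ k := by positivity
    have hb : (1 + b) / 2 = 1 - del b := by unfold del; ring
    have hd1 : 0 ≤ 1 - del b := by unfold del; linarith
    have hp : 0 ≤ (1 - del b) * del b ^ k := by positivity
    simp only [cantorLeft, hb]
    split_ifs
    · constructor
      · linarith
      · rw [pow_succ]; linarith
    · constructor
      · linarith
      · rw [pow_succ]; linarith

/-- The centre of a generation-`k` interval sees its left child, of mass `2^{-(k+1)}`, within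
distance `δ^k`, where the kernel is at least `δ^{-k(2-α)} = s₀^k`. -/
lemma potential_lower {α b : ℝ} (hα2 : α < 2) (hb1 : 1 / 3 ≤ b) (hb2 : b < 1)
    {ω : Measure ℝ} (hω : IsCantorMeasure b ω) (k : ℕ) (j : Fin (2 ^ k)) :
    ENNReal.ofReal (s0 α b ^ k * ((2 : ℝ) ^ (k + 1))⁻¹) ≤
      ∫⁻ y, ENNReal.ofReal (|zc b k (j + 1) - y| ^ (α - 2)) ∂ω := by
  have hd : 0 < del b := by unfold del; linarith
  have hd2 : del b < 1 / 2 := by unfold del; linarith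
  have hk : 0 < del b ^ k := by positivity
  have hmass : ω (cantorI b (k + 1) (2 * j + 1)) = (2 ^ (k + 1) : ℝ≥0∞)⁻¹ :=
    hω.2.2 (k + 1) (2 * j + 1) (by omega) (by have := j.2; rw [pow_succ]; omega)
  have hs : s0 α b ^ k = (del b ^ k) ^ (α - 2) := by
    rw [s0, ← Real.rpow_natCast, ← Real.rpow_natCast, ← Real.rpow_mul hd.le,
      ← Real.rpow_mul hd.le]
    ring_nf
  have hs0 : 0 ≤ s0 α b := by unfold s0; positivity
  calc ENNReal.ofReal (s0 α b ^ k * ((2 : ℝ) ^ (k + 1))⁻¹)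
      = ∫⁻ _ in cantorI b (k + 1) (2 * j + 1), ENNReal.ofReal (s0 α b ^ k) ∂ω := by
        rw [setLIntegral_const, hmass, ENNReal.ofReal_mul (pow_nonneg hs0 k),
          ENNReal.ofReal_inv_of_pos (by positivity), ENNReal.ofReal_pow (zero_le_two (α := ℝ))]
        simp
    _ ≤ ∫⁻ y in cantorI b (k + 1) (2 * j + 1),
          ENNReal.ofReal (|zc b k (j + 1) - y| ^ (α - 2)) ∂ω := by
        refine setLIntegral_mono' measurableSet_Icc fun y hy => ?_
        have hy' : y ∈ Icc (cantorLeft b k j) (cantorLeft b k j + del b ^ (k + 1)) := by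
          simpa [cantorI, cantorLeft_two_mul] using hy
        have hlt : del b ^ (k + 1) < del b ^ k / 2 := by
          rw [pow_succ]; nlinarith
        have hz : zc b k (j + 1) = cantorLeft b k j + del b ^ k / 2 := by simp [zc]
        have hpos : 0 < zc b k (j + 1) - y := by rw [hz]; linarith [hy'.2]
        rw [hs, abs_of_pos hpos]
        refine ENNReal.ofReal_le_ofReal
          (Real.rpow_le_rpow_of_nonpos hpos ?_ (by linarith))
        rw [hz]; linarith [hy'.1]
    _ ≤ _ := setLIntegral_le_lintegral _ _

/-- The one-dimensional fractional testing condition fails for the pair `(σ̈, ω̈)`: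
`∫_{[0,1]} (T̈(1_{[0,1]}ω̈)(x))² dσ̈(x) = ∞`, where `T̈μ(x) = ∫ |x-y|^{-(2-α)} dμ(y)`. -/
theorem fractional_testing_fails (α b : ℝ) (hα0 : 0 ≤ α) (hα2 : α < 2) (hb1 : 1 / 3 ≤ b) (hb2 : b < 1)
    (hs1 : 1 / 9 ≤ del b ^ (2 - α)) (hs2 : del b ^ (2 - α) ≤ 1 / 3)
    (ω : Measure ℝ) (hω : IsCantorMeasure b ω) :
    ∫⁻ x in Icc (0 : ℝ) 1,
        (∫⁻ y in Icc (0 : ℝ) 1, ENNReal.ofReal (|x - y| ^ (α - 2)) ∂ω) ^ 2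
      ∂(sigmaM α b) = ⊤ := by
  have hd : 0 < del b := by unfold del; linarith
  have hs0 : 0 < s0 α b := by unfold s0; positivity
  have hmemω : ∀ᵐ y ∂ω, y ∈ Icc (0 : ℝ) 1 := mem_ae_iff.2 hω.2.1
  rw [Measure.restrict_eq_self_of_ae_mem hmemω]
  set F : ℝ → ℝ≥0∞ := fun x => (∫⁻ y, ENNReal.ofReal (|x - y| ^ (α - 2)) ∂ω) ^ 2 with hF
  have hz : ∀ (k : ℕ) (j : Fin (2 ^ k)), zc b k (j + 1) ∈ Icc (0 : ℝ) 1 := by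
    intro k j
    obtain ⟨h0, h1⟩ := cantorLeft_mem hb1 hb2 k j
    have hk : 0 < del b ^ k := by positivity
    simp only [zc, Nat.add_sub_cancel]
    exact ⟨by linarith, by linarith⟩
  have hterm : ∀ (k : ℕ) (j : Fin (2 ^ k)),
      ENNReal.ofReal (4⁻¹ * ((2 : ℝ) ^ k)⁻¹) ≤
        ENNReal.ofReal (sWt α b k) * F (zc b k (j + 1)) := by
    intro k j
    have hw : 0 ≤ sWt α b k := by unfold sWt; positivity
    calc ENNReal.ofReal (4⁻¹ * ((2 : ℝ) ^ k)⁻¹)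
        = ENNReal.ofReal (sWt α b k) *
            ENNReal.ofReal (s0 α b ^ k * ((2 : ℝ) ^ (k + 1))⁻¹) ^ 2 := by
          rw [← ENNReal.ofReal_pow (by positivity), ← ENNReal.ofReal_mul hw]
          congr 1
          simp only [sWt, div_pow, pow_succ]
          field_simp
          ring
      _ ≤ _ := by
          simp only [hF]
          gcongr
          exact potential_lower hα2 hb1 hb2 hω k j
  have hgen : ∀ k : ℕ, (4 : ℝ≥0∞)⁻¹ ≤
      ∑ j : Fin (2 ^ k), ENNReal.ofReal (sWt α b k) * F (zc b k (j + 1)) := by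
    intro k
    calc (4 : ℝ≥0∞)⁻¹ = ∑ _j : Fin (2 ^ k), ENNReal.ofReal (4⁻¹ * ((2 : ℝ) ^ k)⁻¹) := by
          rw [Finset.sum_const, ← ENNReal.ofReal_nsmul, Finset.card_univ, Fintype.card_fin,
            nsmul_eq_mul]
          push_cast
          rw [mul_left_comm, mul_inv_cancel₀ (by positivity), mul_one,
            ENNReal.ofReal_inv_of_pos (by norm_num)]
          norm_num
      _ ≤ _ := Finset.sum_le_sum fun j _ => hterm k j
  have hint : ∫⁻ x in Icc (0 : ℝ) 1, F x ∂(sigmaM α b) =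
      ∑' k : ℕ, ∑ j : Fin (2 ^ k), ENNReal.ofReal (sWt α b k) * F (zc b k (j + 1)) := by
    have hmem : ∀ᵐ x ∂(sigmaM α b), x ∈ Icc (0 : ℝ) 1 := by
      refine mem_ae_iff.2 ?_
      change sigmaM α b (Icc (0 : ℝ) 1)ᶜ = 0
      rw [sigmaM, Measure.sum_apply _ measurableSet_Icc.compl]
      refine ENNReal.tsum_eq_zero.2 fun k => ?_
      rw [Measure.sum_apply _ measurableSet_Icc.compl]
      refine ENNReal.tsum_eq_zero.2 fun j => ?_
      rw [Measure.smul_apply, Measure.dirac_apply' _ measurableSet_Icc.compl,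
        indicator_of_notMem (notMem_compl_iff.2 (hz k j)), smul_zero]
    rw [Measure.restrict_eq_self_of_ae_mem hmem, sigmaM, lintegral_sum_measure]
    refine tsum_congr fun k => ?_
    rw [lintegral_sum_measure, tsum_fintype]
    refine Finset.sum_congr rfl fun j _ => ?_
    rw [lintegral_smul_measure, lintegral_dirac, smul_eq_mul]
  rw [hint, eq_top_iff, ← ENNReal.tsum_const_eq_top_of_ne_zero (α := ℕ) (c := (4 : ℝ≥0∞)⁻¹) (by simp)]
  exact ENNReal.tsum_le_tsum hgen
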